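/- Let K₁ and K₂ be scattered compact Hausdorff spaces, and suppose that for some ordinal α and some n ∈ ℕ with n ≥ 2, one has ht(K₁) > ω^α·n and K₂^(ω^α) = {y} for some point y ∈ K₂. Then every surjective linear isomorphism T : C(K₁) → C(K₂) satisfies ‖T‖·‖T⁻¹‖ ≥ n + √((n−1)(n+3)); that is, d_BM(C(K₁), C(K₂)) ≥ n + √((n−1)(n+3)). -/

import Mathlib

open Ordinal Set

/-- The Cantor–Bendixson derivative of order `o`. -/
noncomputable def cbDeriv (X : Type*) [TopologicalSpace X] : Ordinal.{0} → Set X :=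
  fun o => Ordinal.limitRecOn o Set.univ
    (fun _ ih => derivedSet ih)
    (fun o _ ih => ⋂ (β : Ordinal) (h : β < o), ih β h)

/-- A space is scattered if some Cantor–Bendixson derivative is empty. -/
def Scattered (X : Type*) [TopologicalSpace X] : Prop :=
  ∃ o : Ordinal.{0}, cbDeriv X o = ∅

/-- The Cantor–Bendixson height: the least ordinal whose derivative is empty. -/
noncomputable def cbHeight (X : Type*) [TopologicalSpace X] : Ordinal.{0} :=
  sInf {o : Ordinal | cbDeriv X o = ∅}

/-!
Let `T : C(X) → C(Y)` be bounded and let `G ⊆ Y` be closed with empty `ω ^ α`-th derivative. By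
transfinite induction on `α`, near every point of `X^(ω ^ α)` there is a bump function whose image
under `T` is small on `G`: for finite `G` take one of many disjointly supported bumps, and to pass
from `ω ^ α * k` to `ω ^ α * (k + 1)` average a long chain of nested bumps, each of them having
small image where the images of the earlier ones are large.

If `Y^(ω ^ α)` is a single point `y`, the same construction gives, above a point of
`X^(ω ^ α * n)`, nested bumps `g 0, …, g (n - 1)` with almost disjoint images which are almost
concentrated where `T f` is almost `T f y`, for some `f` in the unit ball which is `1` near these
bumps and satisfies `|T f y| ≥ 1 - ε`. Assume `‖h‖ ≤ ‖T h‖` for all `h`, and put `M = ‖T‖` and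
`A = |T f y|`. Applying `T` to `f - 2 • g i` and `f - 2 • (g 0 - g i)`, which lie in the unit ball,
gives up to `O(ε)` the bounds `‖T (g 0)‖ ≤ P = (M + A) / 2` and `‖T (g i)‖ ≤ Q = (M - A) / 2` for
`i > 0`. Applying it to `∑ i, ‖T (g i)‖⁻¹ • g i`, whose image has norm almost at most `1`, gives
`1 / P + (n - 1) / Q ≤ 1`. The weakest instance is `A = 1`, a quadratic inequality in `M` whose
larger root is `n + √((n - 1) * (n + 3))`.
-/

open Order CantorBendixson

section IteratedDerivedSet

variable {X : Type*} [TopologicalSpace X] {s t : Set X}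

lemma iteratedDerivedSet_add (s : Set X) (a b : Ordinal) : sᵈ[a + b] = (sᵈ[a])ᵈ[b] := by
  induction b using Ordinal.limitRecOn with
  | zero => simp
  | add_one b ih => rw [← add_assoc, iteratedDerivedSet_succ, iteratedDerivedSet_succ, ih]
  | limit b hb ih =>
    rw [iteratedDerivedSet_limit hb, iteratedDerivedSet_limit (isSuccLimit_add a hb)]
    apply subset_antisymm
    · refine subset_iInter fun c => ?_
      rw [← ih c c.2]
      exact iInter_subset_of_subset ⟨a + c, add_lt_add_right c.2 a⟩ subset_rfl
    · refine subset_iInter fun c => ?_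
      obtain ⟨d, hd, hcd⟩ := (lt_add_iff_of_isSuccLimit hb).1 c.2
      refine iInter_subset_of_subset ⟨d, hd⟩ ?_
      rw [← ih d hd]
      exact iteratedDerivedSet_antitone s hcd.le

lemma iteratedDerivedSet_union (hs : IsClosed s) (ht : IsClosed t) (a : Ordinal) :
    (s ∪ t)ᵈ[a] = sᵈ[a] ∪ tᵈ[a] := by
  induction a using Ordinal.limitRecOn with
  | zero => simp
  | add_one a ih =>
    have hsa := isClosed_iteratedDerivedSet hs a
    have hta := isClosed_iteratedDerivedSet ht a
    simp only [iteratedDerivedSet_succ, ih, (hsa.union hta).relDerivedSet_eq,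
      hsa.relDerivedSet_eq, hta.relDerivedSet_eq, derivedSet_union]
  | limit a ha ih =>
    rw [iteratedDerivedSet_limit ha, iteratedDerivedSet_limit ha, iteratedDerivedSet_limit ha,
      ← iInter_union_of_antitone]
    · exact iInter_congr fun b => ih b b.2
    · exact fun _ _ h => iteratedDerivedSet_antitone s h
    · exact fun _ _ h => iteratedDerivedSet_antitone t h

lemma exists_lt_iteratedDerivedSet_eq_empty [CompactSpace X] (hs : IsClosed s) {a : Ordinal}
    (ha : IsSuccLimit a) (h : sᵈ[a] = ∅) : ∃ b < a, sᵈ[b] = ∅ := by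
  by_contra! hne
  have : Nonempty (Iio a) := ⟨⟨⊥, ha.bot_lt⟩⟩
  have hclosed (b : Iio a) := isClosed_iteratedDerivedSet hs b
  have hinter := IsCompact.nonempty_iInter_of_directed_nonempty_isCompact_isClosed
    (fun b : Iio a => sᵈ[b])
    (Antitone.directed_ge fun _ _ h => iteratedDerivedSet_antitone s h)
    (fun b => hne b b.2) (fun b => (hclosed b).isCompact) hclosed
  rw [← iteratedDerivedSet_limit ha, h] at hinter
  exact not_nonempty_empty hinter

lemma finite_of_relDerivedSet_eq_empty (hs : IsCompact s) (h : relDerivedSet s = ∅) :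
    s.Finite := by
  by_contra hinf
  obtain ⟨x, hxs, hx⟩ := Set.Infinite.exists_accPt_of_subset_isCompact hinf hs subset_rfl
  exact h.subset ⟨hx, hxs⟩

lemma relDerivedSet_eq_empty_of_finite [T1Space X] (hs : s.Finite) : relDerivedSet s = ∅ :=
  eq_empty_of_forall_notMem fun _ hx => Set.Infinite.of_accPt hx.1 hs

end IteratedDerivedSet

section CbDerivWithin

universe u
variable {X : Type u} [TopologicalSpace X] {s t : Set X} {a b : Ordinal.{0}}

/-- The Cantor–Bendixson derivative of order `a` of a subset. As in `cbDeriv`, the index lies in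
`Ordinal.{0}` whatever the universe of `X`, so that subsets of two spaces living in different
universes can be compared. -/
def cbDerivWithin (s : Set X) (a : Ordinal.{0}) : Set X := sᵈ[Ordinal.lift.{u} a]

lemma cbDerivWithin_univ (a : Ordinal.{0}) : cbDerivWithin (univ : Set X) a = cbDeriv X a := by
  unfold cbDerivWithin cbDeriv
  induction a using Ordinal.limitRecOn with
  | zero => simp
  | add_one a ih =>
    rw [limitRecOn_add_one, ← ih, lift_add, lift_one, iteratedDerivedSet_succ,
      (isClosed_iteratedDerivedSet isClosed_univ _).relDerivedSet_eq]
  | limit a ha ih =>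
    rw [limitRecOn_limit _ _ _ _ ha, iteratedDerivedSet_limit (by simpa using ha)]
    ext x
    simp only [mem_iInter, Subtype.forall, mem_Iio, lt_lift_iff, forall_exists_index, and_imp]
    constructor
    · intro hx b hb
      rw [← ih b hb]
      exact hx _ b hb rfl
    · rintro hx _ b hb rfl
      rw [ih b hb]
      exact hx b hb

@[simp]
lemma cbDerivWithin_zero (s : Set X) : cbDerivWithin s 0 = s := by simp [cbDerivWithin]

lemma cbDerivWithin_one (s : Set X) : cbDerivWithin s 1 = relDerivedSet s := by
  rw [cbDerivWithin, lift_one, ← zero_add 1, iteratedDerivedSet_succ, iteratedDerivedSet_zero]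

lemma cbDerivWithin_add (s : Set X) (a b : Ordinal.{0}) :
    cbDerivWithin s (a + b) = cbDerivWithin (cbDerivWithin s a) b := by
  simp only [cbDerivWithin, lift_add, iteratedDerivedSet_add]

lemma cbDerivWithin_antitone (s : Set X) : Antitone (cbDerivWithin s) :=
  fun _ _ h => iteratedDerivedSet_antitone s (Ordinal.lift_le.2 h)

lemma cbDerivWithin_subset (s : Set X) (a : Ordinal.{0}) : cbDerivWithin s a ⊆ s := by
  simpa using cbDerivWithin_antitone s (zero_le : 0 ≤ a)

lemma cbDerivWithin_mono (h : s ⊆ t) (a : Ordinal.{0}) :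
    cbDerivWithin s a ⊆ cbDerivWithin t a :=
  iteratedDerivedSet_mono h _

lemma isClosed_cbDerivWithin (hs : IsClosed s) (a : Ordinal.{0}) : IsClosed (cbDerivWithin s a) :=
  isClosed_iteratedDerivedSet hs _

lemma cbDerivWithin_union (hs : IsClosed s) (ht : IsClosed t) (a : Ordinal.{0}) :
    cbDerivWithin (s ∪ t) a = cbDerivWithin s a ∪ cbDerivWithin t a :=
  iteratedDerivedSet_union hs ht _

lemma cbDerivWithin_eq_empty_of_le (hab : a ≤ b) (h : cbDerivWithin s a = ∅) :
    cbDerivWithin s b = ∅ :=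
  subset_empty_iff.1 ((cbDerivWithin_antitone s hab).trans h.subset)

lemma cbDerivWithin_eq_empty_of_disjoint (hst : s ⊆ t) (h : Disjoint s (cbDerivWithin t a)) :
    cbDerivWithin s a = ∅ :=
  subset_empty_iff.1 fun _ hx => disjoint_left.1 h (cbDerivWithin_subset s a hx)
    (cbDerivWithin_mono hst a hx)

lemma cbDerivWithin_eq_empty_of_finite [T1Space X] (hs : s.Finite) (ha : 1 ≤ a) :
    cbDerivWithin s a = ∅ :=
  cbDerivWithin_eq_empty_of_le ha <| by
    rw [cbDerivWithin_one, relDerivedSet_eq_empty_of_finite hs]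

lemma exists_lt_cbDerivWithin_eq_empty [CompactSpace X] (hs : IsClosed s) (ha : IsSuccLimit a)
    (h : cbDerivWithin s a = ∅) : ∃ b < a, cbDerivWithin s b = ∅ := by
  obtain ⟨_, hlt, hb⟩ := exists_lt_iteratedDerivedSet_eq_empty hs (by simpa using ha) h
  obtain ⟨b, hba, rfl⟩ := lt_lift_iff.1 hlt
  exact ⟨b, hba, hb⟩

lemma cbDeriv_nonempty_of_lt_cbHeight (h : a < cbHeight X) : (cbDeriv X a).Nonempty :=
  nonempty_iff_ne_empty.2 fun h_empty => h.not_ge (csInf_le' h_empty)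

end CbDerivWithin

section Bump

variable {X : Type*} [TopologicalSpace X] {U V : Set X} {g : C(X, ℝ)}

/-- A bump function for the pair `(U, V)`: it is `[0, 1]`-valued, equal to `1` on `V` and to `0`
off `U`. -/
structure IsBump (g : C(X, ℝ)) (U V : Set X) : Prop where
  mem_Icc : ∀ x, g x ∈ Icc (0 : ℝ) 1
  eqOn_one : EqOn g 1 V
  eqOn_zero : EqOn g 0 Uᶜ

lemma exists_isBump [NormalSpace X] [RegularSpace X] (hU : IsOpen U) {x : X} (hx : x ∈ U) :
    ∃ (g : C(X, ℝ)) (V : Set X), IsOpen V ∧ x ∈ V ∧ IsBump g U V := by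
  obtain ⟨C, hCx, hC, hCU⟩ := exists_mem_nhds_isClosed_subset (hU.mem_nhds hx)
  obtain ⟨g, hg0, hg1, hg⟩ := exists_continuous_zero_one_of_isClosed hU.isClosed_compl hC
    (disjoint_compl_left_iff_subset.2 hCU)
  exact ⟨g, interior C, isOpen_interior, mem_interior_iff_mem_nhds.2 hCx,
    ⟨hg, hg1.mono interior_subset, hg0⟩⟩

namespace IsBump

lemma subset (hg : IsBump g U V) : V ⊆ U := by
  intro x hxV
  by_contra hxU
  simpa [hg.eqOn_one hxV] using hg.eqOn_zero hxU

lemma mono {U' V' : Set X} (hg : IsBump g U V) (hU : U ⊆ U') (hV : V' ⊆ V) : IsBump g U' V' :=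
  ⟨hg.mem_Icc, hg.eqOn_one.mono hV, hg.eqOn_zero.mono (compl_subset_compl.2 hU)⟩

lemma mem_of_ne_zero (hg : IsBump g U V) {x : X} (hx : g x ≠ 0) : x ∈ U :=
  not_not.1 fun hxU => hx (hg.eqOn_zero hxU)

lemma abs_apply (hg : IsBump g U V) (x : X) : |g x| = g x := abs_of_nonneg (hg.mem_Icc x).1

lemma convex (U V : Set X) : Convex ℝ {g : C(X, ℝ) | IsBump g U V} := by
  intro g hg k hk a b ha hb hab
  refine ⟨fun x => ?_, fun x hx => ?_, fun x hx => ?_⟩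
  · exact convex_Icc (0 : ℝ) 1 (hg.mem_Icc x) (hk.mem_Icc x) ha hb hab
  · simp [hg.eqOn_one hx, hk.eqOn_one hx, hab]
  · simp [hg.eqOn_zero hx, hk.eqOn_zero hx]

lemma sub {g' : C(X, ℝ)} (hg : IsBump g U V) (hg' : IsBump g' U V)
    (h : EqOn g 1 (Function.support g')) : IsBump (g - g') U ∅ := by
  refine ⟨fun x => ?_, by simp, fun x hx => ?_⟩
  · by_cases hx : g' x = 0
    · simpa [hx] using hg.mem_Icc x
    · have h0 := hg'.mem_Icc x
      simpa [h hx, and_comm] using h0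
  · simp [hg.eqOn_zero hx, hg'.eqOn_zero hx]

variable [CompactSpace X]

lemma norm_le_one (hg : IsBump g U V) : ‖g‖ ≤ 1 :=
  (ContinuousMap.norm_le _ zero_le_one).2 fun x => by
    rw [Real.norm_eq_abs, hg.abs_apply]
    exact (hg.mem_Icc x).2

lemma one_le_norm (hg : IsBump g U V) (hV : V.Nonempty) : 1 ≤ ‖g‖ := by
  obtain ⟨x, hx⟩ := hV
  simpa [hg.eqOn_one hx] using g.norm_coe_le_norm x

lemma norm_sub_two_smul_le_one (hg : IsBump g U V) {f : C(X, ℝ)} (hf : ‖f‖ ≤ 1)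
    (hfU : EqOn f 1 U) : ‖f - (2 : ℝ) • g‖ ≤ 1 := by
  refine (ContinuousMap.norm_le _ zero_le_one).2 fun x => ?_
  by_cases hx : g x = 0
  · simpa [hx] using (f.norm_coe_le_norm x).trans hf
  · obtain ⟨h0, h1⟩ := hg.mem_Icc x
    have hfx : f x = 1 := hfU (hg.mem_of_ne_zero hx)
    simp only [ContinuousMap.sub_apply, ContinuousMap.smul_apply, _root_.smul_eq_mul, hfx,
      Real.norm_eq_abs, abs_le]
    constructor <;> linarith

lemma norm_add_sub_mul_le_one (hg : IsBump g U V) {h : C(X, ℝ)}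
    (hh : ‖h‖ ≤ 1) : ‖h + g - h * g‖ ≤ 1 := by
  refine (ContinuousMap.norm_le _ zero_le_one).2 fun x => ?_
  have h_mem : h x ∈ Icc (-1 : ℝ) 1 := abs_le.1 ((h.norm_coe_le_norm x).trans hh)
  have h_comb : (h + g - h * g) x = (1 - g x) * h x + g x * 1 := by
    simp only [ContinuousMap.sub_apply, ContinuousMap.add_apply, ContinuousMap.mul_apply]
    ring
  rw [h_comb]
  exact abs_le.2 <| convex_Icc (-1 : ℝ) 1 h_mem (right_mem_Icc.2 (by norm_num))
    (sub_nonneg.2 (hg.mem_Icc x).2) (hg.mem_Icc x).1 (sub_add_cancel _ _)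

end IsBump

lemma exists_isBump_norm_sub_mul_le [CompactSpace X] [NormalSpace X] [RegularSpace X]
    (h : C(X, ℝ)) (x₀ : X) {η : ℝ} (hη : 0 < η) :
    ∃ (u : C(X, ℝ)) (U V : Set X), IsOpen V ∧ x₀ ∈ V ∧ IsBump u U V ∧
      ‖h * u - h x₀ • u‖ ≤ η := by
  obtain ⟨u, V, hV, hxV, hu⟩ := exists_isBump (U := {x | |h x - h x₀| < η}) (x := x₀)
    (isOpen_lt (by fun_prop) continuous_const) (by simpa using hη)
  refine ⟨u, _, V, hV, hxV, hu, (ContinuousMap.norm_le _ hη.le).2 fun x => ?_⟩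
  have h_apply : (h * u - h x₀ • u) x = (h x - h x₀) * u x := by
    simp only [ContinuousMap.sub_apply, ContinuousMap.mul_apply, ContinuousMap.smul_apply,
      _root_.smul_eq_mul]
    ring
  rw [h_apply, Real.norm_eq_abs, abs_mul, hu.abs_apply]
  by_cases hx : u x = 0
  · simpa [hx] using hη.le
  · have hhx : |h x - h x₀| < η := hu.mem_of_ne_zero hx
    exact (mul_le_of_le_one_right (abs_nonneg _) (hu.mem_Icc x).2).trans hhx.le

lemma abs_apply_le_abs_apply_add_sub_mul [CompactSpace X] (φ : C(X, ℝ) →L[ℝ] ℝ)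
    {h u : C(X, ℝ)} {c : ℝ} (hc : c ≤ 1) (hφ : 0 ≤ φ h * φ u) :
    |φ h| ≤ |φ (h + u - h * u)| + ‖φ‖ * ‖h * u - c • u‖ := by
  have h_split : φ (h + u - h * u) = φ h + (1 - c) * φ u - φ (h * u - c • u) := by
    simp only [map_add, map_sub, map_smul, _root_.smul_eq_mul]
    ring
  have h_same_sign : |φ h| ≤ |φ h + (1 - c) * φ u| := by
    refine sq_le_sq.1 ?_
    nlinarith [sq_nonneg ((1 - c) * φ u), mul_nonneg (sub_nonneg.2 hc) hφ]
  calc |φ h| ≤ |φ h + (1 - c) * φ u| := h_same_sign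
    _ = |φ (h + u - h * u) + φ (h * u - c • u)| := by rw [h_split, sub_add_cancel]
    _ ≤ |φ (h + u - h * u)| + |φ (h * u - c • u)| := abs_add_le _ _
    _ ≤ |φ (h + u - h * u)| + ‖φ‖ * ‖h * u - c • u‖ := by gcongr; exact φ.le_opNorm _

-- One of `h`, `-h` has an image under `φ` of the same sign as `φ u`, for a bump `u` supported
-- where `h` is almost `h x₀`; interpolating it with `1` along `u` costs almost nothing.
lemma exists_eqOn_one_abs_apply_sub_le [CompactSpace X] [T2Space X] (φ : C(X, ℝ) →L[ℝ] ℝ)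
    {h : C(X, ℝ)} (hh : ‖h‖ ≤ 1) (x₀ : X) {ε : ℝ} (hε : 0 < ε) :
    ∃ (f : C(X, ℝ)) (U : Set X), IsOpen U ∧ x₀ ∈ U ∧ ‖f‖ ≤ 1 ∧ EqOn f 1 U ∧
      |φ h| - ε ≤ |φ f| := by
  obtain ⟨η, hη, hφη⟩ := exists_pos_mul_lt hε ‖φ‖
  obtain ⟨u, U, V, hV, hxV, hu, hhu⟩ := exists_isBump_norm_sub_mul_le h x₀ hη
  suffices h_nonneg : ∀ k : C(X, ℝ), ‖k‖ ≤ 1 → |φ k| = |φ h| → ‖k * u - k x₀ • u‖ ≤ η →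
      0 ≤ φ k * φ u → _ by
    rcases le_total 0 (φ h * φ u) with hsign | hsign
    · exact h_nonneg h hh rfl hhu hsign
    · refine h_nonneg (-h) (by rwa [norm_neg]) (by rw [map_neg, abs_neg]) ?_ (by simpa using hsign)
      have h_neg : -h * u - (-h) x₀ • u = -(h * u - h x₀ • u) := by
        rw [ContinuousMap.neg_apply, neg_smul, neg_mul, neg_sub_neg, neg_sub]
      rwa [h_neg, norm_neg]
  intro k hk hkh hku hsign
  refine ⟨k + u - k * u, V, hV, hxV, hu.norm_add_sub_mul_le_one hk, fun x hx => ?_, ?_⟩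
  · simp [hu.eqOn_one hx]
  · have hkx : k x₀ ≤ 1 := (le_abs_self _).trans ((k.norm_coe_le_norm x₀).trans hk)
    have hφk := abs_apply_le_abs_apply_add_sub_mul φ hkx hsign
    have hφd : ‖φ‖ * ‖k * u - k x₀ • u‖ ≤ ‖φ‖ * η := by gcongr
    linarith

end Bump

section OneLarge

variable {ι : Type*} [Fintype ι] {a : ι → ℝ} {B ε : ℝ}

lemma sum_le_add_card_mul_of_subsingleton (hB : 0 ≤ B) (hε : 0 ≤ ε) (ha : ∀ i, a i ≤ B)
    (hlarge : {i | ε ≤ a i}.Subsingleton) : ∑ i, a i ≤ B + Fintype.card ι * ε := by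
  classical
  have h_small (s : Finset ι) (hs : ∀ i ∈ s, a i ≤ ε) : ∑ i ∈ s, a i ≤ Fintype.card ι * ε :=
    calc ∑ i ∈ s, a i ≤ s.card • ε := Finset.sum_le_card_nsmul _ _ _ hs
      _ ≤ Fintype.card ι * ε := by
        rw [_root_.nsmul_eq_mul]
        gcongr
        exact s.card_le_univ
  by_cases h : ∃ i, ε ≤ a i
  · obtain ⟨i, hi⟩ := h
    rw [← Finset.add_sum_erase _ _ (Finset.mem_univ i)]
    refine add_le_add (ha i) (h_small _ fun j hj => le_of_not_ge fun hεj => ?_)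
    exact Finset.ne_of_mem_erase hj (hlarge hεj hi)
  · push Not at h
    linarith [h_small Finset.univ fun i _ => (h i).le]

end OneLarge

section Operator

variable {X Y : Type*} [TopologicalSpace X] [CompactSpace X] [TopologicalSpace Y] [CompactSpace Y]
  (T : C(X, ℝ) →L[ℝ] C(Y, ℝ))

lemma abs_apply_apply_le_opNorm {f : C(X, ℝ)} (hf : ‖f‖ ≤ 1) (y : Y) : |T f y| ≤ ‖T‖ :=
  ((T f).norm_coe_le_norm y).trans (T.unit_le_opNorm f hf)

lemma sum_abs_apply_apply_le_opNorm {ι : Type*} (s : Finset ι) {g : ι → C(X, ℝ)}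
    (hg : ∀ x, ∑ i ∈ s, |g i x| ≤ 1) (y : Y) : ∑ i ∈ s, |T (g i) y| ≤ ‖T‖ := by
  let σ (i : ι) : ℝ := SignType.sign (T (g i) y)
  have hσ (i : ι) : |σ i| ≤ 1 := by
    rcases lt_trichotomy (T (g i) y) 0 with h | h | h <;> simp [σ, h]
  have h_norm : ‖∑ i ∈ s, σ i • g i‖ ≤ 1 := by
    refine (ContinuousMap.norm_le _ zero_le_one).2 fun x => ?_
    rw [ContinuousMap.sum_apply]
    refine (Finset.abs_sum_le_sum_abs _ _).trans ((Finset.sum_le_sum fun i _ => ?_).trans (hg x))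
    rw [ContinuousMap.smul_apply, _root_.smul_eq_mul, abs_mul]
    exact mul_le_of_le_one_left (abs_nonneg _) (hσ i)
  calc ∑ i ∈ s, |T (g i) y| = T (∑ i ∈ s, σ i • g i) y := by
        simp only [map_sum, map_smul, ContinuousMap.sum_apply, ContinuousMap.smul_apply,
          _root_.smul_eq_mul, σ, sign_mul_self]
    _ ≤ |T (∑ i ∈ s, σ i • g i) y| := le_abs_self _
    _ ≤ ‖T‖ := abs_apply_apply_le_opNorm T h_norm y

lemma exists_forall_mem_abs_apply_apply_lt {ι : Type*} {s : Finset ι} {g : ι → C(X, ℝ)}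
    (hg : ∀ x, ∑ i ∈ s, |g i x| ≤ 1) {G : Finset Y} {ε : ℝ} (hs : G.card * ‖T‖ < s.card * ε) :
    ∃ i ∈ s, ∀ y ∈ G, |T (g i) y| < ε := by
  by_contra! hbad
  refine hs.not_ge ?_
  calc s.card * ε = s.card • ε := (_root_.nsmul_eq_mul _ _).symm
    _ ≤ ∑ i ∈ s, ∑ y ∈ G, |T (g i) y| := by
        refine Finset.card_nsmul_le_sum _ _ _ fun i hi => ?_
        obtain ⟨y, hy, hεy⟩ := hbad i hi
        exact hεy.trans (Finset.single_le_sum (f := fun y => |T (g i) y|)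
          (fun _ _ => abs_nonneg _) hy)
    _ = ∑ y ∈ G, ∑ i ∈ s, |T (g i) y| := Finset.sum_comm
    _ ≤ G.card • ‖T‖ :=
        Finset.sum_le_card_nsmul _ _ _ fun y _ => sum_abs_apply_apply_le_opNorm T s hg y
    _ = G.card * ‖T‖ := _root_.nsmul_eq_mul _ _

end Operator

section SmallBumps

variable {X Y : Type*} [TopologicalSpace X] [TopologicalSpace Y] {T : C(X, ℝ) →L[ℝ] C(Y, ℝ)}
  {φ ψ : Ordinal.{0}} {E F G : Set Y} {ε : ℝ} {U V W : Set X}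

/-- Descending `φ` Cantor–Bendixson levels in `X` makes the images of bump functions `ε`-small on
`G`: every open set meeting the `φ`-th derivative of a set `D` supports a bump function which is `1`
near some point of `D` and whose image under `T` is less than `ε` in absolute value on `G`. -/
def HasSmallBumps (T : C(X, ℝ) →L[ℝ] C(Y, ℝ)) (φ : Ordinal.{0}) (G : Set Y) (ε : ℝ) : Prop :=
  ∀ D U : Set X, IsOpen U → (U ∩ cbDerivWithin D φ).Nonempty →
    ∃ (g : C(X, ℝ)) (V : Set X), IsOpen V ∧ (V ∩ D).Nonempty ∧ IsBump g U V ∧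
      ∀ y ∈ G, |T g y| < ε

lemma HasSmallBumps.mono_ordinal (h : HasSmallBumps T φ G ε) (hφ : φ ≤ ψ) :
    HasSmallBumps T ψ G ε := fun D U hU hUD =>
  h D U hU (hUD.mono (inter_subset_inter_right _ (cbDerivWithin_antitone D hφ)))

lemma hasSmallBumps_union (hT : ∀ F : Set Y, IsClosed F → cbDerivWithin F φ = ∅ →
      HasSmallBumps T ψ F ε) (hGF : G ⊆ F) (hG : IsClosed G) (hE : IsClosed E)
    (hGE : Disjoint G (cbDerivWithin F φ)) (hE_empty : cbDerivWithin E φ = ∅) :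
    HasSmallBumps T ψ (G ∪ E) ε := by
  refine hT _ (hG.union hE) ?_
  rw [cbDerivWithin_union hG hE, hE_empty, union_empty]
  exact cbDerivWithin_eq_empty_of_disjoint hGF hGE

/-- A finite chain of bump functions for the same pair `(U, V)`, each equal to `1` on the support
of the later ones, at most one of whose images under `T` reaches `ε` at any given point of `F`. -/
structure IsBumpChain (T : C(X, ℝ) →L[ℝ] C(Y, ℝ)) (F : Set Y) (ε : ℝ) (U V : Set X) {N : ℕ}
    (g : Fin N → C(X, ℝ)) : Prop where
  isBump : ∀ i, IsBump (g i) U V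
  nested : ∀ ⦃i j⦄, i < j → EqOn (g i) 1 (Function.support (g j))
  subsingleton : ∀ y ∈ F, {i | ε ≤ |T (g i) y|}.Subsingleton

lemma IsBumpChain.cons {N : ℕ} {g₀ : C(X, ℝ)} {g : Fin N → C(X, ℝ)} (hg₀ : IsBump g₀ U W)
    (hVW : V ⊆ W) (hg : IsBumpChain T F ε W V g)
    (h_small : ∀ i, ∀ y ∈ F, ε ≤ |T g₀ y| → |T (g i) y| < ε) :
    IsBumpChain T F ε U V (Fin.cons g₀ g : Fin (N + 1) → C(X, ℝ)) where
  isBump := by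
    refine Fin.cases (hg₀.mono subset_rfl hVW) fun i => ?_
    exact (hg.isBump i).mono hg₀.subset subset_rfl
  nested := by
    intro i j hij
    obtain ⟨j, rfl⟩ := Fin.exists_succ_eq.2 (Fin.ne_zero_of_lt hij)
    cases i using Fin.cases with
    | zero => exact hg₀.eqOn_one.mono fun x hx => (hg.isBump j).mem_of_ne_zero hx
    | succ i => exact hg.nested (Fin.succ_lt_succ_iff.1 hij)
  subsingleton := by
    intro y hy i hi j hj
    cases i using Fin.cases <;> cases j using Fin.cases
    case zero.zero => rfl
    case zero.succ j => exact absurd hj (h_small j y hy hi).not_ge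
    case succ.zero i => exact absurd hi (h_small i y hy hj).not_ge
    case succ.succ i j => exact congrArg Fin.succ (hg.subsingleton y hy hi hj)

-- Each bump is chosen small on the set where an earlier one is large. That set stays disjoint from
-- `E`, because all the bumps are small on `E`.
lemma exists_isBumpChain (hF : IsClosed F)
    (H : ∀ G ⊆ F, IsClosed G → Disjoint G E → HasSmallBumps T φ (G ∪ E) ε) {N : ℕ} {D : Set X}
    (hG : IsClosed G) (hGF : G ⊆ F) (hGE : Disjoint G E)
    (hU : IsOpen U) (hUD : (U ∩ cbDerivWithin D (φ * N)).Nonempty) :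
    ∃ (g : Fin N → C(X, ℝ)) (V : Set X), IsOpen V ∧ V ⊆ U ∧ (V ∩ D).Nonempty ∧
      IsBumpChain T F ε U V g ∧ ∀ i, ∀ y ∈ G ∪ E, |T (g i) y| < ε := by
  induction N generalizing G U with
  | zero =>
    exact ⟨Fin.elim0, U, hU, subset_rfl, by simpa using hUD,
      ⟨fun i => i.elim0, fun i => i.elim0, fun _ _ i => i.elim0⟩, fun i => i.elim0⟩
  | succ N ih =>
    rw [Nat.cast_succ, mul_add_one, cbDerivWithin_add] at hUD
    obtain ⟨g₀, W, hW, hWD, hg₀, hg₀_small⟩ := H G hGF hG hGE _ U hU hUD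
    have h_large : IsClosed (F ∩ {y | ε ≤ |T g₀ y|}) :=
      hF.inter (isClosed_le continuous_const (by fun_prop))
    have h_large_disj : Disjoint (F ∩ {y | ε ≤ |T g₀ y|}) E :=
      disjoint_left.2 fun y hy hyE => (hg₀_small y (Or.inr hyE)).not_ge hy.2
    obtain ⟨g, V, hV, hVW, hVD, hg, hg_small⟩ := ih (hG.union h_large)
      (union_subset hGF inter_subset_left) (hGE.union_left h_large_disj) hW hWD
    refine ⟨Fin.cons g₀ g, V, hV, hVW.trans hg₀.subset, hVD,
      .cons hg₀ hVW hg fun i y hy hεy => hg_small i y (Or.inl (Or.inr ⟨hy, hεy⟩)), ?_⟩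
    refine Fin.cases hg₀_small fun i y hy => hg_small i y ?_
    exact hy.imp_left Or.inl

variable [CompactSpace X]

lemma exists_isBump_sum_abs_le_one [T2Space X] (hU : IsOpen U) (s : Finset X) (hs : ↑s ⊆ U) :
    ∃ (g : X → C(X, ℝ)) (V : X → Set X),
      (∀ x ∈ s, IsOpen (V x) ∧ x ∈ V x ∧ IsBump (g x) U (V x)) ∧ ∀ z, ∑ x ∈ s, |g x z| ≤ 1 := by
  obtain ⟨W, hW, hWd⟩ := s.finite_toSet.t2_separation
  have h_bump : ∀ x ∈ s, ∃ (g : C(X, ℝ)) (V : Set X), IsOpen V ∧ x ∈ V ∧ IsBump g (W x ∩ U) V :=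
    fun x hx => exists_isBump ((hW x).2.inter hU) ⟨(hW x).1, hs hx⟩
  choose! g V hV hxV hg using h_bump
  refine ⟨g, V, fun x hx => ⟨hV x hx, hxV x hx, (hg x hx).mono inter_subset_right subset_rfl⟩,
    fun z => ?_⟩
  by_cases h : ∃ x ∈ s, g x z ≠ 0
  · obtain ⟨x, hx, hxz⟩ := h
    rw [Finset.sum_eq_single_of_mem x hx]
    · rw [(hg x hx).abs_apply]
      exact ((hg x hx).mem_Icc z).2
    · intro x' hx' hne
      by_contra hx'z
      exact disjoint_left.1 (hWd hx' hx hne) ((hg x' hx').mem_of_ne_zero (abs_ne_zero.1 hx'z)).1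
        ((hg x hx).mem_of_ne_zero hxz).1
  · push Not at h
    rw [Finset.sum_eq_zero fun x hx => by rw [h x hx, abs_zero]]
    exact zero_le_one

variable [CompactSpace Y]

lemma hasSmallBumps_one_of_finite [T2Space X] (T : C(X, ℝ) →L[ℝ] C(Y, ℝ)) (hG : G.Finite)
    (hε : 0 < ε) : HasSmallBumps T 1 G ε := by
  intro D U hU ⟨x, hxU, hxD⟩
  rw [cbDerivWithin_one] at hxD
  have h_inf : (U ∩ D).Infinite := Set.Infinite.of_accPt (hxD.1.nhds_inter (hU.mem_nhds hxU))
  obtain ⟨N, hN⟩ := exists_nat_gt (hG.toFinset.card * ‖T‖ / ε)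
  obtain ⟨s, hsUD, rfl⟩ := h_inf.exists_subset_card_eq N
  obtain ⟨g, V, hgV, hg⟩ :=
    exists_isBump_sum_abs_le_one hU s (hsUD.trans inter_subset_left)
  obtain ⟨p, hp, hgp⟩ := exists_forall_mem_abs_apply_apply_lt T hg ((div_lt_iff₀ hε).1 hN)
  obtain ⟨hVp, hpV, h_bump⟩ := hgV p hp
  exact ⟨g p, V p, hVp, ⟨p, hpV, (hsUD hp).2⟩, h_bump, fun y hy => hgp y (hG.mem_toFinset.2 hy)⟩

-- The average of a chain of `N` bumps has image at most `‖T‖ / N + ε / 2` on `F`.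
lemma hasSmallBumps_mul_natCast (hF : IsClosed F) (hε : 0 < ε) {N : ℕ} (hN : ‖T‖ < N * (ε / 2))
    (H : ∀ G ⊆ F, IsClosed G → Disjoint G E → HasSmallBumps T φ (G ∪ E) (ε / 2)) :
    HasSmallBumps T (φ * N) F ε := by
  intro D U hU hUD
  obtain ⟨g, V, hV, -, hVD, hg, -⟩ :=
    exists_isBumpChain hF H isClosed_empty (empty_subset _) (empty_disjoint _) hU hUD
  have hN_pos : (0 : ℝ) < N := pos_of_mul_pos_left ((norm_nonneg T).trans_lt hN) (by positivity)
  refine ⟨∑ i, (N : ℝ)⁻¹ • g i, V, hV, hVD, ?_, fun y hy => ?_⟩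
  · refine (IsBump.convex U V).sum_mem (fun _ _ => by positivity) ?_ fun i _ => hg.isBump i
    simp [hN_pos.ne']
  · have h_sum := sum_le_add_card_mul_of_subsingleton (norm_nonneg T) (half_pos hε).le
      (fun i => abs_apply_apply_le_opNorm T (hg.isBump i).norm_le_one y) (hg.subsingleton y hy)
    rw [← Finset.smul_sum, map_smul, map_sum, ContinuousMap.smul_apply, ContinuousMap.sum_apply,
      _root_.smul_eq_mul, abs_mul, abs_of_pos (inv_pos.2 hN_pos), inv_mul_lt_iff₀ hN_pos]
    calc |∑ i, T (g i) y| ≤ ∑ i, |T (g i) y| := Finset.abs_sum_le_sum_abs _ _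
      _ ≤ ‖T‖ + N * (ε / 2) := by simpa using h_sum
      _ < N * ε := by linarith

lemma exists_hasSmallBumps_mul_natCast
    (H : ∀ ε > 0, ∀ F : Set Y, IsClosed F → cbDerivWithin F φ = ∅ → HasSmallBumps T φ F ε)
    (k : ℕ) (hε : 0 < ε) :
    ∃ N : ℕ, ∀ F : Set Y, IsClosed F → cbDerivWithin F (φ * (k + 1 : ℕ)) = ∅ →
      HasSmallBumps T (φ * N) F ε := by
  induction k generalizing ε with
  | zero => exact ⟨1, by simpa using H ε hε⟩
  | succ k ih =>
    obtain ⟨N₁, hN₁⟩ := ih (half_pos hε)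
    obtain ⟨N, hN⟩ := exists_nat_gt (‖T‖ / (ε / 2))
    refine ⟨N₁ * N, fun F hF hF_empty => ?_⟩
    rw [natCast_mul, ← mul_assoc]
    rw [Nat.cast_succ, mul_add_one, cbDerivWithin_add] at hF_empty
    have hE_empty : cbDerivWithin (cbDerivWithin F (φ * (k + 1 : ℕ))) (φ * (k + 1 : ℕ)) = ∅ :=
      cbDerivWithin_eq_empty_of_le (le_mul_of_one_le_right' (by simp)) hF_empty
    exact hasSmallBumps_mul_natCast hF hε ((div_lt_iff₀ (half_pos hε)).1 hN) fun G hGF hG hGE =>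
      hasSmallBumps_union hN₁ hGF hG (isClosed_cbDerivWithin hF _) hGE hE_empty

theorem hasSmallBumps_omega0_opow [T2Space X] (T : C(X, ℝ) →L[ℝ] C(Y, ℝ)) (α : Ordinal.{0})
    (hε : 0 < ε) (hF : IsClosed F) (hF_empty : cbDerivWithin F (ω ^ α) = ∅) :
    HasSmallBumps T (ω ^ α) F ε := by
  induction α using Ordinal.limitRecOn generalizing F ε with
  | zero =>
    rw [opow_zero] at hF_empty ⊢
    rw [cbDerivWithin_one] at hF_empty
    exact hasSmallBumps_one_of_finite T (finite_of_relDerivedSet_eq_empty hF.isCompact hF_empty) hε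
  | add_one α ih =>
    obtain ⟨b, hb, hFb⟩ := exists_lt_cbDerivWithin_eq_empty hF
      (isSuccLimit_opow_left isSuccLimit_omega0 (by simp)) hF_empty
    rw [opow_add_one] at hb ⊢
    obtain ⟨c, hc, hbc⟩ := (lt_mul_iff_of_isSuccLimit isSuccLimit_omega0).1 hb
    obtain ⟨k, rfl⟩ := lt_omega0.1 hc
    obtain ⟨N, hN⟩ := exists_hasSmallBumps_mul_natCast (fun ε hε F => ih hε) k hε
    have hbk : b ≤ ω ^ α * (k + 1 : ℕ) := hbc.le.trans (by gcongr; simp)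
    refine (hN F hF (cbDerivWithin_eq_empty_of_le hbk hFb)).mono_ordinal ?_
    gcongr
    exact (natCast_lt_omega0 N).le
  | limit α hα ih =>
    obtain ⟨b, hb, hFb⟩ := exists_lt_cbDerivWithin_eq_empty hF
      (isSuccLimit_opow one_lt_omega0 hα) hF_empty
    obtain ⟨c, hc, hbc⟩ := (lt_opow_of_isSuccLimit omega0_ne_zero hα).1 hb
    exact (ih c hc hε hF (cbDerivWithin_eq_empty_of_le hbc.le hFb)).mono_ordinal
      (opow_le_opow_right omega0_pos hc.le)

end SmallBumps

section NormBounds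

variable {X Y : Type*} [TopologicalSpace X] [CompactSpace X] [TopologicalSpace Y] [CompactSpace Y]
  {T : C(X, ℝ) →L[ℝ] C(Y, ℝ)} {U V : Set X} {f g g₀ : C(X, ℝ)} {y : Y} {ε : ℝ}

lemma IsBump.norm_apply_le (hg : IsBump g U V) (hf : ‖f‖ ≤ 1) (hfU : EqOn f 1 U) (hε : 0 ≤ ε)
    (h_small : ∀ z, ε ≤ |T f z - T f y| → |T g z| < ε) :
    ‖T g‖ ≤ (‖T‖ + |T f y| + 3 * ε) / 2 := by
  refine (ContinuousMap.norm_le _ (by positivity)).2 fun z => ?_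
  rw [Real.norm_eq_abs]
  rcases lt_or_ge |T g z| ε with hz | hz
  · linarith [norm_nonneg T, abs_nonneg (T f y)]
  · have h_near : |T f z - T f y| < ε := lt_of_not_ge fun h => (h_small z h).not_ge hz
    have h_test := abs_apply_apply_le_opNorm T (hg.norm_sub_two_smul_le_one hf hfU) z
    simp only [map_sub, map_smul, ContinuousMap.sub_apply, ContinuousMap.smul_apply,
      _root_.smul_eq_mul] at h_test
    have h_double : 2 * |T g z| ≤ ‖T‖ + |T f z| := by
      grind
    linarith [abs_sub_abs_le_abs_sub (T f z) (T f y)]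

lemma IsBump.norm_apply_le_of_nested (hg₀ : IsBump g₀ U V) (hg : IsBump g U V)
    (h_nested : EqOn g₀ 1 (Function.support g)) (hf : ‖f‖ ≤ 1) (hfU : EqOn f 1 U) (hε : 0 ≤ ε)
    (h_small : ∀ z, ε ≤ |T f z - T f y| → |T g z| < ε)
    (h_sep : ∀ z, ε ≤ |T g z| → |T g₀ z| < ε) :
    ‖T g‖ ≤ (‖T‖ - |T f y| + 3 * ε) / 2 := by
  have hy := abs_apply_apply_le_opNorm T hf y
  refine (ContinuousMap.norm_le _ (by linarith)).2 fun z => ?_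
  rw [Real.norm_eq_abs]
  rcases lt_or_ge |T g z| ε with hz | hz
  · linarith
  · have h_near : |T f z - T f y| < ε := lt_of_not_ge fun h => (h_small z h).not_ge hz
    have h_test := abs_apply_apply_le_opNorm T (hg.norm_sub_two_smul_le_one hf hfU) z
    have h_test_sub := abs_apply_apply_le_opNorm T
      ((hg₀.sub hg h_nested).norm_sub_two_smul_le_one hf hfU) z
    simp only [map_sub, map_smul, ContinuousMap.sub_apply, ContinuousMap.smul_apply,
      _root_.smul_eq_mul] at h_test h_test_sub
    have h_both : |T f z| + 2 * |T g z| ≤ ‖T‖ + 2 * ε := by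
      grind [h_sep z hz]
    linarith [abs_sub_abs_le_abs_sub (T f y) (T f z), abs_sub_comm (T f y) (T f z)]

variable {N : ℕ} (hT : ∀ f, ‖f‖ ≤ ‖T f‖) (hV : V.Nonempty) (hε : 0 ≤ ε)
include hT hV hε

lemma IsBumpChain.sum_inv_norm_le {g : Fin N → C(X, ℝ)} (hg : IsBumpChain T univ ε U V g) :
    ∑ i, ‖T (g i)‖⁻¹ ≤ 1 + N * ε := by
  obtain ⟨x, hx⟩ := hV
  have h_norm (i : Fin N) : 1 ≤ ‖T (g i)‖ := ((hg.isBump i).one_le_norm ⟨x, hx⟩).trans (hT _)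
  have h_sum_apply : (∑ i, ‖T (g i)‖⁻¹ • g i) x = ∑ i, ‖T (g i)‖⁻¹ := by
    simp [ContinuousMap.sum_apply, fun i => (hg.isBump i).eqOn_one hx]
  have h_image : ‖T (∑ i, ‖T (g i)‖⁻¹ • g i)‖ ≤ 1 + N * ε := by
    refine (ContinuousMap.norm_le _ (by positivity)).2 fun z => ?_
    have h_le (i : Fin N) : ‖T (g i)‖⁻¹ * |T (g i) z| ≤ 1 :=
      inv_mul_le_one_of_le₀ ((T (g i)).norm_coe_le_norm z) (norm_nonneg _)
    have h_large : {i | ε ≤ ‖T (g i)‖⁻¹ * |T (g i) z|} ⊆ {i | ε ≤ |T (g i) z|} := fun i hi =>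
      le_trans hi (mul_le_of_le_one_left (abs_nonneg _) (inv_le_one_of_one_le₀ (h_norm i)))
    calc ‖T (∑ i, ‖T (g i)‖⁻¹ • g i) z‖ = |∑ i, ‖T (g i)‖⁻¹ * T (g i) z| := by
          simp [ContinuousMap.sum_apply]
      _ ≤ ∑ i, ‖T (g i)‖⁻¹ * |T (g i) z| := by
          refine (Finset.abs_sum_le_sum_abs _ _).trans_eq (Finset.sum_congr rfl fun i _ => ?_)
          rw [abs_mul, abs_inv, abs_norm]
      _ ≤ 1 + N * ε := by
          simpa using sum_le_add_card_mul_of_subsingleton zero_le_one hε h_le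
            ((hg.subsingleton z (mem_univ z)).anti h_large)
  calc ∑ i, ‖T (g i)‖⁻¹ = (∑ i, ‖T (g i)‖⁻¹ • g i) x := h_sum_apply.symm
    _ ≤ ‖∑ i, ‖T (g i)‖⁻¹ • g i‖ := ContinuousMap.apply_le_norm _ x
    _ ≤ ‖T (∑ i, ‖T (g i)‖⁻¹ • g i)‖ := hT _
    _ ≤ 1 + N * ε := h_image

lemma IsBumpChain.inv_add_mul_inv_le {g : Fin (N + 1) → C(X, ℝ)} {P Q : ℝ}
    (hg : IsBumpChain T univ ε U V g) (hP : ‖T (g 0)‖ ≤ P) (hQ : ∀ i : Fin N, ‖T (g i.succ)‖ ≤ Q) :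
    P⁻¹ + N * Q⁻¹ ≤ 1 + (N + 1) * ε := by
  have h_pos (i : Fin (N + 1)) : 0 < ‖T (g i)‖ :=
    zero_lt_one.trans_le (((hg.isBump i).one_le_norm hV).trans (hT _))
  calc P⁻¹ + N * Q⁻¹ = P⁻¹ + ∑ _i : Fin N, Q⁻¹ := by simp
    _ ≤ ‖T (g 0)‖⁻¹ + ∑ i : Fin N, ‖T (g i.succ)‖⁻¹ := by
      gcongr with i
      exacts [h_pos 0, h_pos _, hQ i]
    _ = ∑ i, ‖T (g i)‖⁻¹ := (Fin.sum_univ_succ fun i => ‖T (g i)‖⁻¹).symm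
    _ ≤ 1 + (N + 1) * ε := by simpa using hg.sum_inv_norm_le hT hV hε

end NormBounds

section Numerics

variable {M A ε n : ℝ}

-- `P + Q` does not depend on `A`, and `P` only grows as `A` increases from `1 - ε`.
lemma quadratic_le_of_inv_add_mul_inv_le {P Q : ℝ} (hn : 2 ≤ n) (hε : ε ∈ Ioc 0 1)
    (hA : 1 - ε ≤ A) (hP : P = (M + A + 3 * ε) / 2) (hQ : Q = (M - A + 3 * ε) / 2) (hQ1 : 1 ≤ Q)
    (h : P⁻¹ + (n - 1) * Q⁻¹ ≤ 1 + n * ε) :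
    3 - 4 * ε ≤ M ∧ (M - 1 + 4 * ε) / 2 + (n - 1) * ((M + 1 + 2 * ε) / 2) ≤
      (1 + n * ε) * ((M + 1 + 2 * ε) / 2 * ((M - 1 + 4 * ε) / 2)) := by
  obtain ⟨hε0, hε1⟩ := hε
  set P₀ := (M + 1 + 2 * ε) / 2 with hP₀
  set Q₀ := (M - 1 + 4 * ε) / 2 with hQ₀
  have hP_pos : 0 < P := by linarith
  have h_clear : Q + (n - 1) * P ≤ (1 + n * ε) * (P * Q) := by
    have h_mul := mul_le_mul_of_nonneg_right h (by positivity : 0 ≤ P * Q)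
    field_simp at h_mul
    linarith
  have hP₀P : 0 ≤ P - P₀ := by linarith
  have h_left : Q₀ + (n - 1) * P₀ ≤ Q + (n - 1) * P := by
    linarith [mul_nonneg (sub_nonneg.2 hn) hP₀P]
  have h_right : P * Q ≤ P₀ * Q₀ := by
    have hQ₀P : 0 ≤ P - Q₀ := by linarith
    rw [show Q = P₀ + Q₀ - P by linarith]
    linarith [mul_nonneg hP₀P hQ₀P]
  refine ⟨by linarith, h_left.trans (h_clear.trans ?_)⟩
  gcongr

lemma add_sqrt_le_of_forall_quadratic_le
    (h : ∀ ε ∈ Ioc (0 : ℝ) 1, 3 - 4 * ε ≤ M ∧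
      (M - 1 + 4 * ε) / 2 + (n - 1) * ((M + 1 + 2 * ε) / 2) ≤
        (1 + n * ε) * ((M + 1 + 2 * ε) / 2 * ((M - 1 + 4 * ε) / 2))) :
    n + √((n - 1) * (n + 3)) ≤ M := by
  have h_closed : IsClosed {ε : ℝ | 3 - 4 * ε ≤ M ∧
      (M - 1 + 4 * ε) / 2 + (n - 1) * ((M + 1 + 2 * ε) / 2) ≤
        (1 + n * ε) * ((M + 1 + 2 * ε) / 2 * ((M - 1 + 4 * ε) / 2))} := by
    rw [ofPred_and]
    exact (isClosed_le (by fun_prop) (by fun_prop)).inter (isClosed_le (by fun_prop) (by fun_prop))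
  have h_zero : (0 : ℝ) ∈ closure (Ioc 0 1) := by
    rw [closure_Ioc zero_ne_one]
    exact left_mem_Icc.2 zero_le_one
  obtain ⟨hM, h_quad⟩ := closure_minimal h h_closed h_zero
  have h_sq : (n - 1) * (n + 3) ≤ (M - n) ^ 2 := by linarith
  have hnM : n ≤ M := by
    by_contra! hMn
    have h_gap : (n - M) ^ 2 ≤ (n - 3) ^ 2 := by
      gcongr
      linarith
    linarith
  linarith [Real.sqrt_le_iff.2 ⟨sub_nonneg.2 hnM, h_sq⟩]

end Numerics

section EmbeddingBound

variable {X Y : Type*} [TopologicalSpace X] [CompactSpace X] [T2Space X] [TopologicalSpace Y]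
  [CompactSpace Y] [T1Space Y] {T : C(X, ℝ) →L[ℝ] C(Y, ℝ)} {α : Ordinal.{0}} {n : ℕ} {y : Y}

lemma exists_isBumpChain_univ (hX : (cbDeriv X (ω ^ α * n)).Nonempty)
    (hy : cbDeriv Y (ω ^ α) ⊆ {y}) (h1 : ∃ h, ‖h‖ ≤ 1 ∧ T h = 1) {ε : ℝ} (hε : 0 < ε) :
    ∃ (f : C(X, ℝ)) (U V : Set X) (g : Fin n → C(X, ℝ)), ‖f‖ ≤ 1 ∧ EqOn f 1 U ∧
      1 - ε ≤ |T f y| ∧ V.Nonempty ∧ IsBumpChain T univ ε U V g ∧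
      ∀ i z, ε ≤ |T f z - T f y| → |T (g i) z| < ε := by
  obtain ⟨x₀, hx₀⟩ := hX
  obtain ⟨h, hh, hTh⟩ := h1
  obtain ⟨f, U, hU, hxU, hf, hfU, hTf⟩ :=
    exists_eqOn_one_abs_apply_sub_le ((ContinuousMap.evalCLM ℝ y).comp T) hh x₀ hε
  have h_small (G : Set Y) (hG : IsClosed G) (hGy : Disjoint G {y}) :
      HasSmallBumps T (ω ^ α) (G ∪ {y}) ε := by
    refine hasSmallBumps_union (fun F => hasSmallBumps_omega0_opow T α hε) (subset_univ G) hG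
      isClosed_singleton ?_ (cbDerivWithin_eq_empty_of_finite (finite_singleton y) ?_)
    · rw [cbDerivWithin_univ]
      exact hGy.mono_right hy
    · exact Order.one_le_iff_pos.2 (opow_pos _ omega0_pos)
  have hG : IsClosed {z | ε ≤ |T f z - T f y|} := isClosed_le continuous_const (by fun_prop)
  obtain ⟨g, V, -, -, hV, hg, hgG⟩ := exists_isBumpChain (N := n) (D := univ) isClosed_univ
    (fun G _ => h_small G) hG (subset_univ _) (by simpa using hε) hU
    ⟨x₀, hxU, by rwa [cbDerivWithin_univ]⟩
  refine ⟨f, U, V, g, hf, hfU, ?_, hV.mono inter_subset_left, hg, fun i z hz => hgG i z (.inl hz)⟩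
  simpa [hTh] using hTf

theorem add_sqrt_le_opNorm (hT : ∀ f, ‖f‖ ≤ ‖T f‖) (h1 : 1 ∈ range T) (hn : 2 ≤ n)
    (hX : (cbDeriv X (ω ^ α * n)).Nonempty) (hy : cbDeriv Y (ω ^ α) ⊆ {y}) :
    n + √(((n : ℝ) - 1) * (n + 3)) ≤ ‖T‖ := by
  obtain ⟨h, hTh⟩ := h1
  have hh : ‖h‖ ≤ 1 := (hT h).trans <| by
    simpa [hTh] using (ContinuousMap.norm_le (1 : C(Y, ℝ)) zero_le_one).2 fun z => by simp
  have hn' : (2 : ℝ) ≤ n := by exact_mod_cast hn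
  obtain ⟨N, rfl⟩ : ∃ N, n = N + 1 + 1 := ⟨n - 2, by lia⟩
  refine add_sqrt_le_of_forall_quadratic_le fun ε hε => ?_
  obtain ⟨f, U, V, g, hf, hfU, hfy, hV, hg, h_small⟩ :=
    exists_isBumpChain_univ hX hy ⟨h, hh, hTh⟩ hε.1
  have hP := (hg.isBump 0).norm_apply_le hf hfU hε.1.le (h_small 0)
  have hQ (i : Fin (N + 1)) := (hg.isBump 0).norm_apply_le_of_nested (hg.isBump i.succ)
    (hg.nested i.succ_pos) hf hfU hε.1.le (h_small i.succ) fun z hz => lt_of_not_ge fun h0 =>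
      Fin.succ_ne_zero i (hg.subsingleton z (mem_univ z) hz h0)
  have hQ1 : 1 ≤ ‖T (g (0 : Fin (N + 1)).succ)‖ :=
    ((hg.isBump _).one_le_norm hV).trans (hT _)
  have h_inv := hg.inv_add_mul_inv_le hT hV hε.1.le hP hQ
  refine quadratic_le_of_inv_add_mul_inv_le hn' hε hfy rfl rfl (hQ1.trans (hQ 0)) ?_
  simpa using h_inv

end EmbeddingBound

theorem stmt_19_general {K₁ K₂ : Type*} [TopologicalSpace K₁] [CompactSpace K₁] [T2Space K₁]
    [TopologicalSpace K₂] [CompactSpace K₂] [T1Space K₂] (α : Ordinal.{0}) (n : ℕ) (hn : 2 ≤ n)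
    (hK₁ : (cbDeriv K₁ (ω ^ α * n)).Nonempty) (y : K₂) (hK₂ : cbDeriv K₂ (ω ^ α) ⊆ {y})
    (T : C(K₁, ℝ) →L[ℝ] C(K₂, ℝ)) (hT1 : 1 ∈ range T) {c : NNReal} (hT : AntilipschitzWith c T) :
    (n : ℝ) + Real.sqrt (((n : ℝ) - 1) * ((n : ℝ) + 3)) ≤ ‖T‖ * c := by
  have hc : (c : ℝ) ≠ 0 := by
    intro hc
    obtain ⟨x, -⟩ := hK₁
    have h_one := ((1 : C(K₁, ℝ)).norm_coe_le_norm x).trans (T.bound_of_antilipschitz hT 1)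
    norm_num [hc] at h_one
  have h_norm (f : C(K₁, ℝ)) : ‖f‖ ≤ ‖((c : ℝ) • T) f‖ := by
    simpa [norm_smul] using T.bound_of_antilipschitz hT f
  have h_range : 1 ∈ range ((c : ℝ) • T) := by
    obtain ⟨h, hh⟩ := hT1
    exact ⟨(c : ℝ)⁻¹ • h, by simp [hh, smul_smul, hc]⟩
  calc _ ≤ ‖(c : ℝ) • T‖ := add_sqrt_le_opNorm h_norm h_range hn hK₁ hK₂
    _ ≤ ‖(c : ℝ)‖ * ‖T‖ := ContinuousLinearMap.opNorm_smul_le _ _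
    _ = ‖T‖ * c := by rw [Real.norm_eq_abs, NNReal.abs_eq, mul_comm]

/-- If `K₁`, `K₂` are scattered compact Hausdorff spaces with `ht(K₁) > ω^α·n`
(`n ≥ 2`) and `K₂^(ω^α) = {y}`, then every surjective linear isomorphism
`T : C(K₁) → C(K₂)` satisfies `‖T‖·‖T⁻¹‖ ≥ n + √((n-1)(n+3))`. -/
theorem stmt_19 {K₁ K₂ : Type*} [TopologicalSpace K₁] [CompactSpace K₁] [T2Space K₁]
    [TopologicalSpace K₂] [CompactSpace K₂] [T2Space K₂]
    (hs₁ : Scattered K₁) (hs₂ : Scattered K₂)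
    (α : Ordinal.{0}) (n : ℕ) (hn : 2 ≤ n)
    (hht : ω ^ α * n < cbHeight K₁)
    (y : K₂) (hy : cbDeriv K₂ (ω ^ α) = {y}) :
    ∀ T : C(K₁, ℝ) ≃L[ℝ] C(K₂, ℝ),
      (n : ℝ) + Real.sqrt (((n : ℝ) - 1) * ((n : ℝ) + 3)) ≤
        ‖(T : C(K₁, ℝ) →L[ℝ] C(K₂, ℝ))‖ * ‖(T.symm : C(K₂, ℝ) →L[ℝ] C(K₁, ℝ))‖ := by
  intro T
  exact stmt_19_general α n hn (cbDeriv_nonempty_of_lt_cbHeight hht) y hy.subset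
    (T : C(K₁, ℝ) →L[ℝ] C(K₂, ℝ)) (T.surjective 1) T.antilipschitz
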